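/- Fix N ≥ 1, T > 0, and let S_N = {0, 1/N, 2/N, …, 1}. Suppose V : [0,T] × S_N → ℝ is differentiable in t and satisfies, for every μ ∈ S_N and t ∈ [0,T]: −(d/dt)V(t,μ) + ((V(t,1−μ) − V(t,μ))⁻)²/2 = Nμ · (V(t,1−μ) − V(t,μ))⁻ · (V(t,μ−1/N) − V(t,μ)) + N(1−μ) · (V(t,μ+1/N) − V(t,1−μ−1/N))⁻ · (V(t,μ+1/N) − V(t,μ)), where terms carrying the coefficient Nμ are omitted when μ = 0 and terms carrying N(1−μ) are omitted when μ = 1. If |V(T,μ)| ≤ 1 for all μ ∈ S_N, then |V(t,μ)| ≤ 1 for all t ∈ [0,T] and all μ ∈ S_N. -/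

import Mathlib

/-- The grid `S_N = {0, 1/N, 2/N, …, 1}` of possible empirical fractions. -/
def gridSN (N : ℕ) : Set ℝ := {μ : ℝ | ∃ k : ℕ, k ≤ N ∧ μ = (k : ℝ) / N}

/-- `V` solves, on `[0,T] × S_N`, the closed Hamilton–Jacobi–Bellman ODE system
`−(d/dt)V(t,μ) + ((V(t,1−μ) − V(t,μ))⁻)²/2
  = Nμ·(V(t,1−μ) − V(t,μ))⁻·(V(t,μ−1/N) − V(t,μ))
    + N(1−μ)·(V(t,μ+1/N) − V(t,1−μ−1/N))⁻·(V(t,μ+1/N) − V(t,μ))`,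
with the `Nμ`-terms omitted at `μ = 0` and the `N(1−μ)`-terms omitted at `μ = 1`;
here `p⁻ = max (−p) 0` is the negative part. -/
def HJBSol (N : ℕ) (T : ℝ) (V : ℝ → ℝ → ℝ) : Prop :=
  ∀ μ ∈ gridSN N, ∀ t ∈ Set.Icc (0:ℝ) T,
    HasDerivWithinAt (fun s : ℝ => V s μ)
      ((max (-(V t (1 - μ) - V t μ)) 0)^2 / 2
        - (if μ = 0 then 0 else
            (N : ℝ) * μ * (max (-(V t (1 - μ) - V t μ)) 0)
              * (V t (μ - 1/(N : ℝ)) - V t μ))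
        - (if μ = 1 then 0 else
            (N : ℝ) * (1 - μ)
              * (max (-(V t (μ + 1/(N : ℝ)) - V t (1 - μ - 1/(N : ℝ)))) 0)
              * (V t (μ + 1/(N : ℝ)) - V t μ)))
      (Set.Icc (0:ℝ) T) t

/-!
At a time `t`, let `V t μ` be largest among the grid values. The jump terms then point to smaller
values and have nonnegative rates, so `dV/dt ≥ 0`; the square only helps. Where `V t μ` is smallest,
the negative part `(V(t,1−μ) − V(t,μ))⁻` vanishes, which removes both the square and the down-jump
term, and `dV/dt ≤ 0` remains. So, going backward from `T`, the maximum over the grid cannot grow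
and the minimum cannot drop.
-/

open Set Filter Topology

section MaximumPrinciple

theorem exists_forall_le_of_isCompact_of_finite {ι X α : Type*} [Finite ι] [Nonempty ι]
    [TopologicalSpace X] [LinearOrder α] [TopologicalSpace α] [ClosedIciTopology α]
    {K : Set X} {f : ι → X → α} (hK : IsCompact K) (hne : K.Nonempty)
    (hf : ∀ i, ContinuousOn (f i) K) :
    ∃ i, ∃ x ∈ K, ∀ j, ∀ y ∈ K, f j y ≤ f i x := by
  choose x hxK hx using fun i => hK.exists_isMaxOn hne (hf i)
  obtain ⟨i, hi⟩ := Finite.exists_max fun i => f i (x i)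
  exact ⟨i, x i, hxK i, fun j y hy => (hx j hy).trans (hi j)⟩

theorem nonpos_of_hasDerivWithinAt_Ici_of_isLocalMaxOn {f : ℝ → ℝ} {f' t : ℝ}
    (hf : HasDerivWithinAt f f' (Ici t) t) (hmax : IsLocalMaxOn f (Ici t) t) : f' ≤ 0 := by
  have hcone : (1 : ℝ) ∈ posTangentConeAt (Ici t) t :=
    mem_posTangentConeAt_of_segment_subset <|
      (convex_Ici t).segment_subset self_mem_Ici (by simp)
  simpa using hmax.hasFDerivWithinAt_nonpos hf.hasFDerivWithinAt hcone

variable {ι : Type*} [Finite ι] {a b M : ℝ} {f f' : ι → ℝ → ℝ}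

theorem le_of_right_le_of_deriv_pos_at_max
    (hf : ∀ i, ContinuousOn (f i) (Icc a b))
    (hf' : ∀ i, ∀ t ∈ Ico a b, HasDerivWithinAt (f i) (f' i t) (Ici t) t)
    (hpos : ∀ i, ∀ t ∈ Ico a b, (∀ j, f j t ≤ f i t) → 0 < f' i t)
    (hb : ∀ i, f i b ≤ M) (i : ι) {t : ℝ} (ht : t ∈ Icc a b) : f i t ≤ M := by
  have : Nonempty ι := ⟨i⟩
  obtain ⟨k, s, hs, hmax⟩ := exists_forall_le_of_isCompact_of_finite isCompact_Icc ⟨t, ht⟩ hf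
  obtain rfl | hsb := hs.2.eq_or_lt
  · exact (hmax i t ht).trans (hb k)
  · have hs' : s ∈ Ico a b := ⟨hs.1, hsb⟩
    have hlocal : IsLocalMaxOn (f k) (Ici s) s := by
      filter_upwards [Icc_mem_nhdsGE_of_mem hs'] with r hr using hmax k r hr
    exact absurd (nonpos_of_hasDerivWithinAt_Ici_of_isLocalMaxOn (hf' k s hs') hlocal)
      (hpos k s hs' fun j => hmax j s hs).not_ge

theorem le_of_right_le_of_deriv_nonneg_at_max
    (hf : ∀ i, ContinuousOn (f i) (Icc a b))
    (hf' : ∀ i, ∀ t ∈ Ico a b, HasDerivWithinAt (f i) (f' i t) (Ici t) t)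
    (hnonneg : ∀ i, ∀ t ∈ Ico a b, (∀ j, f j t ≤ f i t) → 0 ≤ f' i t)
    (hb : ∀ i, f i b ≤ M) (i : ι) {t : ℝ} (ht : t ∈ Icc a b) : f i t ≤ M := by
  -- The tilt `ε * (s - b)` makes the derivative condition strict and vanishes at `b`.
  have tilted_le (ε : ℝ) (hε : 0 < ε) : f i t + ε * (t - b) ≤ M := by
    refine le_of_right_le_of_deriv_pos_at_max (f := fun i s => f i s + ε * (s - b))
      (f' := fun i s => f' i s + ε) (fun i => (hf i).add (by fun_prop)) (fun i s hs => ?_)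
      (fun i s hs hmax => ?_) (fun i => by simpa using hb i) i ht
    · simpa using (hf' i s hs).fun_add (((hasDerivWithinAt_id s _).sub_const b).const_mul ε)
    · exact add_pos_of_nonneg_of_pos (hnonneg i s hs fun j => by simpa using hmax j) hε
  have htendsto : Tendsto (fun ε : ℝ => f i t + ε * (t - b)) (𝓝[>] 0) (𝓝 (f i t)) := by
    have : Continuous fun ε : ℝ => f i t + ε * (t - b) := by fun_prop
    simpa using (this.tendsto 0).mono_left nhdsWithin_le_nhds
  exact le_of_tendsto htendsto (eventually_mem_nhdsWithin.mono tilted_le)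

theorem le_of_le_right_of_deriv_nonpos_at_min
    (hf : ∀ i, ContinuousOn (f i) (Icc a b))
    (hf' : ∀ i, ∀ t ∈ Ico a b, HasDerivWithinAt (f i) (f' i t) (Ici t) t)
    (hnonpos : ∀ i, ∀ t ∈ Ico a b, (∀ j, f i t ≤ f j t) → f' i t ≤ 0)
    (hb : ∀ i, M ≤ f i b) (i : ι) {t : ℝ} (ht : t ∈ Icc a b) : M ≤ f i t :=
  neg_le_neg_iff.1 <| le_of_right_le_of_deriv_nonneg_at_max (f := fun i s => -f i s)
    (fun i => (hf i).neg) (fun i s hs => (hf' i s hs).fun_neg)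
    (fun i s hs hmax => neg_nonneg.2 <| hnonpos i s hs fun j => neg_le_neg_iff.1 (hmax j))
    (fun i => neg_le_neg (hb i)) i ht

end MaximumPrinciple

section Grid

variable {N : ℕ} {μ : ℝ}

theorem finite_gridSN (N : ℕ) : (gridSN N).Finite :=
  ((finite_Iic N).image fun k : ℕ => (k : ℝ) / N).subset <| by
    rintro _ ⟨k, hk, rfl⟩
    exact mem_image_of_mem _ hk

theorem gridSN_subset_Icc : gridSN N ⊆ Icc 0 1 := by
  rintro _ ⟨k, hk, rfl⟩
  exact ⟨by positivity, div_le_one_of_le₀ (by exact_mod_cast hk) N.cast_nonneg⟩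

theorem one_sub_mem_gridSN (hN : N ≠ 0) (hμ : μ ∈ gridSN N) : 1 - μ ∈ gridSN N := by
  obtain ⟨k, hk, rfl⟩ := hμ
  refine ⟨N - k, N.sub_le k, ?_⟩
  rw [Nat.cast_sub hk]
  field_simp

theorem sub_one_div_mem_gridSN (hμ : μ ∈ gridSN N) (h0 : μ ≠ 0) : μ - 1 / N ∈ gridSN N := by
  obtain ⟨k, hk, rfl⟩ := hμ
  have hk0 : k ≠ 0 := by
    rintro rfl
    simp at h0
  refine ⟨k - 1, k.pred_le.trans hk, ?_⟩
  rw [Nat.cast_pred (Nat.pos_of_ne_zero hk0), sub_div]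

theorem add_one_div_mem_gridSN (hN : N ≠ 0) (hμ : μ ∈ gridSN N) (h1 : μ ≠ 1) :
    μ + 1 / N ∈ gridSN N := by
  have h := one_sub_mem_gridSN hN <|
    sub_one_div_mem_gridSN (one_sub_mem_gridSN hN hμ) (sub_ne_zero.2 h1.symm)
  rwa [sub_sub, sub_sub_cancel] at h

end Grid

section HJB

variable {N : ℕ} {T M μ t : ℝ} {v : ℝ → ℝ} {V : ℝ → ℝ → ℝ}

/-- The time derivative that the Hamilton–Jacobi–Bellman system prescribes at `μ` when the value
function at that time is `v`. No case distinction at `μ = 0` and `μ = 1` is made: there the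
coefficients `N * μ` and `N * (1 - μ)` cancel the values of `v` off the grid. -/
noncomputable def hjbField (N : ℕ) (v : ℝ → ℝ) (μ : ℝ) : ℝ :=
  (v (1 - μ) - v μ)⁻ ^ 2 / 2
    - N * μ * (v (1 - μ) - v μ)⁻ * (v (μ - 1 / N) - v μ)
    - N * (1 - μ) * (v (μ + 1 / N) - v (1 - μ - 1 / N))⁻ * (v (μ + 1 / N) - v μ)

theorem mul_sub_nonpos_of_isMaxOn_gridSN_left {c : ℝ} (hc : 0 ≤ c) (hμ : μ ∈ gridSN N)
    (hmax : IsMaxOn v (gridSN N) μ) : N * μ * c * (v (μ - 1 / N) - v μ) ≤ 0 := by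
  obtain rfl | h0 := eq_or_ne μ 0
  · simp
  · have hμ0 : 0 ≤ μ := (gridSN_subset_Icc hμ).1
    exact mul_nonpos_of_nonneg_of_nonpos (by positivity)
      (sub_nonpos.2 <| hmax <| sub_one_div_mem_gridSN hμ h0)

theorem mul_sub_nonpos_of_isMaxOn_gridSN_right {c : ℝ} (hN : N ≠ 0) (hc : 0 ≤ c)
    (hμ : μ ∈ gridSN N) (hmax : IsMaxOn v (gridSN N) μ) :
    N * (1 - μ) * c * (v (μ + 1 / N) - v μ) ≤ 0 := by
  obtain rfl | h1 := eq_or_ne μ 1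
  · simp
  · have hμ1 : 0 ≤ 1 - μ := sub_nonneg.2 (gridSN_subset_Icc hμ).2
    exact mul_nonpos_of_nonneg_of_nonpos (by positivity)
      (sub_nonpos.2 <| hmax <| add_one_div_mem_gridSN hN hμ h1)

theorem hjbField_nonneg_of_isMaxOn (hN : N ≠ 0) (hμ : μ ∈ gridSN N)
    (hmax : IsMaxOn v (gridSN N) μ) : 0 ≤ hjbField N v μ := by
  have hsq : 0 ≤ (v (1 - μ) - v μ)⁻ ^ 2 / 2 := by positivity
  have hdown := mul_sub_nonpos_of_isMaxOn_gridSN_left (negPart_nonneg (v (1 - μ) - v μ)) hμ hmax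
  have hup := mul_sub_nonpos_of_isMaxOn_gridSN_right hN
    (negPart_nonneg (v (μ + 1 / N) - v (1 - μ - 1 / N))) hμ hmax
  unfold hjbField
  linarith

theorem hjbField_nonpos_of_isMinOn (hN : N ≠ 0) (hμ : μ ∈ gridSN N)
    (hmin : IsMinOn v (gridSN N) μ) : hjbField N v μ ≤ 0 := by
  have hswitch : (v (1 - μ) - v μ)⁻ = 0 :=
    negPart_eq_zero.2 <| sub_nonneg.2 <| hmin <| one_sub_mem_gridSN hN hμ
  have hup := mul_sub_nonpos_of_isMaxOn_gridSN_right hN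
    (negPart_nonneg (v (μ + 1 / N) - v (1 - μ - 1 / N))) hμ hmin.neg
  simp only [hjbField, hswitch]
  linarith

namespace HJBSol

theorem hasDerivWithinAt (hV : HJBSol N T V) (hμ : μ ∈ gridSN N) (ht : t ∈ Icc 0 T) :
    HasDerivWithinAt (fun s => V s μ) (hjbField N (V t) μ) (Icc 0 T) t := by
  convert hV μ hμ t ht using 1
  unfold hjbField
  congr 1
  · congr 1
    split_ifs with h0
    · simp [h0]
    · rfl
  · split_ifs with h1
    · simp [h1]
    · rfl

theorem hasDerivWithinAt_Ici (hV : HJBSol N T V) (hμ : μ ∈ gridSN N) (ht : t ∈ Ico 0 T) :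
    HasDerivWithinAt (fun s => V s μ) (hjbField N (V t) μ) (Ici t) t :=
  (hV.hasDerivWithinAt hμ (Ico_subset_Icc_self ht)).mono_of_mem_nhdsWithin
    (Icc_mem_nhdsGE_of_mem ht)

theorem continuousOn (hV : HJBSol N T V) (hμ : μ ∈ gridSN N) :
    ContinuousOn (fun s => V s μ) (Icc 0 T) :=
  fun _ ht => (hV.hasDerivWithinAt hμ ht).continuousWithinAt

theorem le_of_terminal_le (hV : HJBSol N T V) (hN : N ≠ 0) (hterm : ∀ μ ∈ gridSN N, V T μ ≤ M)
    (ht : t ∈ Icc 0 T) (hμ : μ ∈ gridSN N) : V t μ ≤ M := by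
  have := (finite_gridSN N).to_subtype
  exact le_of_right_le_of_deriv_nonneg_at_max (f := fun (ν : gridSN N) s => V s ν)
    (fun ν => hV.continuousOn ν.2) (fun ν s hs => hV.hasDerivWithinAt_Ici ν.2 hs)
    (fun ν _ _ hmax => hjbField_nonneg_of_isMaxOn hN ν.2 fun κ hκ => hmax ⟨κ, hκ⟩)
    (fun ν => hterm ν ν.2) ⟨μ, hμ⟩ ht

theorem le_of_le_terminal (hV : HJBSol N T V) (hN : N ≠ 0) (hterm : ∀ μ ∈ gridSN N, M ≤ V T μ)
    (ht : t ∈ Icc 0 T) (hμ : μ ∈ gridSN N) : M ≤ V t μ := by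
  have := (finite_gridSN N).to_subtype
  exact le_of_le_right_of_deriv_nonpos_at_min (f := fun (ν : gridSN N) s => V s ν)
    (fun ν => hV.continuousOn ν.2) (fun ν s hs => hV.hasDerivWithinAt_Ici ν.2 hs)
    (fun ν _ _ hmin => hjbField_nonpos_of_isMinOn hN ν.2 fun κ hκ => hmin ⟨κ, hκ⟩)
    (fun ν => hterm ν ν.2) ⟨μ, hμ⟩ ht

end HJBSol

end HJB

/-- If `V` solves the HJB ODE system on `[0,T] × S_N` and `|V(T,μ)| ≤ 1` on the
grid, then `|V(t,μ)| ≤ 1` for all `t ∈ [0,T]` and all `μ ∈ S_N`. -/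
theorem stmt_11 (N : ℕ) (hN : 1 ≤ N) (T : ℝ) (hT : 0 < T) (V : ℝ → ℝ → ℝ)
    (hV : HJBSol N T V) (hterm : ∀ μ ∈ gridSN N, |V T μ| ≤ 1) :
    ∀ t ∈ Set.Icc (0:ℝ) T, ∀ μ ∈ gridSN N, |V t μ| ≤ 1 := by
  have hN0 : N ≠ 0 := Nat.one_le_iff_ne_zero.1 hN
  intro t ht μ hμ
  exact abs_le.2
    ⟨hV.le_of_le_terminal hN0 (fun ν hν => (abs_le.1 (hterm ν hν)).1) ht hμ,
      hV.le_of_terminal_le hN0 (fun ν hν => (abs_le.1 (hterm ν hν)).2) ht hμ⟩
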